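/- arXiv:1801.01556 — 2 statements merged into one kernel-verified Lean document; each statement's English description precedes it below -/
import Mathlib

section
/- For every integer k ≥ 5, the inducibility of the cycle C_k satisfies ind(C_k) ≤ 2·k!/k^k; equivalently, for every ε > 0 there exists N such that for all n ≥ N, every n-vertex graph G satisfies i(C_k, G) ≤ (2 + ε)·k!/k^k. -/
/-!
Choose images in `G` for the vertices of the cycle one after the other, each uniformly among the
candidates adjacent to the earlier images exactly as prescribed. Every embedding `f` is hit with
probability the product of the inverse numbers of candidates met along the way, so for each of the
`k` possible starting points on the cycle these products sum to at most `1` over all `f`.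

Weight the candidate counts of the steps `0, 1, …, k - 1` by `1/k, 1/2, 1/2, 1, …, 1`. For a fixed
`f`, a vertex of `G` is a candidate with total weight at most `k`, summed over all steps and all
starting points. By the inequality of arithmetic and geometric means, the products belonging to
`f` are then on average at least `k ^ k / (4 * k * n ^ k)`, whence there are at most
`4 * k * n ^ k / k ^ k` embeddings. Every induced cycle carries `2 * k` of them.
-/

open Finset SimpleGraph Filter
open scoped Nat

noncomputable section

variable {V W : Type*}

theorem card_mul_card_aut_eq_card_embedding (G : SimpleGraph V) (H : SimpleGraph W) :
    Nat.card {S : Set V // Nonempty (G.induce S ≃g H)} * Nat.card (H ≃g H) =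
      Nat.card (H ↪g G) := by
  let ofCopy (p : {S : Set V // Nonempty (G.induce S ≃g H)} × (H ≃g H)) : H ↪g G :=
    (Embedding.induce p.1.1).comp (p.1.2.some.symm.toEmbedding.comp p.2.toEmbedding)
  have range_ofCopy p : Set.range (ofCopy p) = p.1.1 := by
    ext v
    constructor
    · rintro ⟨w, rfl⟩
      exact (p.1.2.some.symm (p.2 w)).2
    · intro hv
      exact ⟨p.2.symm (p.1.2.some ⟨v, hv⟩), by simp [ofCopy]⟩
  rw [← Nat.card_prod]
  refine Nat.card_eq_of_bijective ofCopy ⟨?_, fun f => ?_⟩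
  · rintro ⟨S, a⟩ ⟨T, b⟩ hab
    obtain rfl : S = T := Subtype.ext <| by rw [← range_ofCopy (S, a), hab, range_ofCopy]
    refine Prod.ext rfl (RelIso.ext fun w => ?_)
    exact S.2.some.symm.injective (Subtype.ext (DFunLike.congr_fun hab w))
  · let S : {S : Set V // Nonempty (G.induce S ≃g H)} := ⟨Set.range f, ⟨f.isoInduceRange.symm⟩⟩
    exact ⟨(S, f.isoInduceRange.trans S.2.some), by ext w; simp [ofCopy, S]; rfl⟩

theorem two_mul_card_le_card_aut_circulantGraph {A : Type*} [AddCommGroup A] [Finite A]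
    (s : Set A) (h : ∃ x : A, x + x ≠ 0) :
    2 * Nat.card A ≤ Nat.card (circulantGraph s ≃g circulantGraph s) := by
  let translation (a : A) : circulantGraph s ≃g circulantGraph s :=
    ⟨Equiv.addLeft a, by simp⟩
  let reflection (a : A) : circulantGraph s ≃g circulantGraph s :=
    ⟨Equiv.subLeft a, by simp [or_comm]⟩
  have translation_injective : Function.Injective translation := fun a b hab => by
    simpa [translation] using DFunLike.congr_fun hab 0
  have reflection_injective : Function.Injective reflection := fun a b hab => by
    simpa [reflection] using DFunLike.congr_fun hab 0
  have translation_ne_reflection a b : translation a ≠ reflection b := fun hab => by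
    obtain ⟨x, hx⟩ := h
    have h0 : a = b := by simpa [translation, reflection] using DFunLike.congr_fun hab 0
    have hx' : a + x = b - x := DFunLike.congr_fun hab x
    apply hx
    calc x + x = (a + x) - (b - x) + (b - a) := by abel
      _ = 0 := by rw [hx', h0, sub_self, sub_self, add_zero]
  have : Finite (circulantGraph s ≃g circulantGraph s) := DFunLike.finite _
  have := Nat.card_le_card_of_injective (Sum.elim translation reflection)
    (translation_injective.sumElim reflection_injective translation_ne_reflection)
  rwa [Nat.card_sum, ← two_mul] at this

theorem eventually_mul_pow_le_factorial_mul_choose (k : ℕ) {c : ℝ} (hc : c < 1) :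
    ∀ᶠ n : ℕ in atTop, c * (n : ℝ) ^ k ≤ k ! * n.choose k := by
  filter_upwards [(isEquivalent_choose k).isLittleO.bound (sub_pos.2 hc)] with n hn
  have hk : (0 : ℝ) < k ! := by positivity
  rw [Pi.sub_apply, Real.norm_eq_abs, Real.norm_of_nonneg (by positivity)] at hn
  have := (abs_le.1 hn).1
  field_simp at this
  linarith

theorem card_le_pow_mul_sum_prod_inv {ι σ : Type*} [Fintype ι] [Fintype σ] {x : σ → ι → ℝ}
    (hx : ∀ s i, 0 < x s i) {t : ℝ} (ht : 0 < t)
    (h : ∑ s, ∑ i, x s i ≤ Fintype.card σ * (Fintype.card ι * t)) :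
    Fintype.card σ ≤ t ^ Fintype.card ι * ∑ s, ∏ i, (x s i)⁻¹ := by
  have tangent_line s : 1 + ∑ i, (1 - x s i / t) ≤ t ^ Fintype.card ι * ∏ i, (x s i)⁻¹ :=
    calc
      1 + ∑ i, (1 - x s i / t) ≤ Real.exp (∑ i, (1 - x s i / t)) := by
        rw [add_comm]
        exact Real.add_one_le_exp _
      _ = ∏ i, Real.exp (1 - x s i / t) := Real.exp_sum _ _
      _ ≤ ∏ i, t * (x s i)⁻¹ := by
        gcongr with i
        have hpos : 0 < x s i / t := div_pos (hx s i) ht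
        rw [← div_eq_mul_inv, ← inv_div (x s i), ← Real.le_log_iff_exp_le (inv_pos.2 hpos)]
        simpa using Real.one_sub_inv_le_log_of_pos (inv_pos.2 hpos)
      _ = t ^ Fintype.card ι * ∏ i, (x s i)⁻¹ := by
        rw [prod_mul_distrib, prod_const, card_univ]
  calc
    (Fintype.card σ : ℝ) ≤ ∑ s, (1 + ∑ i, (1 - x s i / t)) := by
      simp only [sum_add_distrib, sum_sub_distrib, ← sum_div, sum_const, card_univ, nsmul_eq_mul,
        mul_one]
      have := (div_le_iff₀ ht).2 (h.trans_eq (mul_assoc _ _ _).symm)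
      linarith
    _ ≤ t ^ Fintype.card ι * ∑ s, ∏ i, (x s i)⁻¹ := by
      rw [mul_sum]
      exact sum_le_sum fun s _ => tangent_line s

theorem sum_prod_ite_mem_inv_card_le_one [Fintype V] [DecidableEq V] {k : ℕ}
    (A : Fin k → (Fin k → V) → Finset V)
    (hA : ∀ i f g, (∀ j < i, f j = g j) → A i f = A i g) :
    ∑ f : Fin k → V, ∏ i, (if f i ∈ A i f then (#(A i f) : ℝ)⁻¹ else 0) ≤ 1 := by
  induction k with
  | zero => simp
  | succ k ih =>
    rcases isEmpty_or_nonempty V with _ | ⟨⟨v⟩⟩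
    · simp
    set A₀ := A 0 fun _ => v
    have first_step f : A 0 f = A₀ := hA _ _ _ (by simp)
    have later_steps x : ∑ f : Fin k → V, ∏ i : Fin k, (if f i ∈ A i.succ (Fin.cons x f) then
        (#(A i.succ (Fin.cons x f)) : ℝ)⁻¹ else 0) ≤ 1 := by
      refine ih (fun i f => A i.succ (Fin.cons x f)) fun i f g hfg => hA _ _ _ fun j hj => ?_
      cases j using Fin.cases with
      | zero => rfl
      | succ j => simpa using hfg j (Fin.succ_lt_succ_iff.1 hj)
    calc
      _ = ∑ x, (if x ∈ A₀ then (#A₀ : ℝ)⁻¹ else 0) * ∑ f : Fin k → V, ∏ i : Fin k,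
          (if f i ∈ A i.succ (Fin.cons x f) then
            (#(A i.succ (Fin.cons x f)) : ℝ)⁻¹ else 0) := by
        rw [← (Fin.consEquiv fun _ => V).sum_comp, Fintype.sum_prod_type]
        simp [Fin.prod_univ_succ, first_step, mul_sum, Fin.consEquiv]
      _ ≤ ∑ x, (if x ∈ A₀ then (#A₀ : ℝ)⁻¹ else 0) :=
        sum_le_sum fun x _ => mul_le_of_le_one_right (by positivity) (later_steps x)
      _ ≤ 1 := by
        simpa [sum_ite_mem] using mul_inv_le_one

/-! ### Choosing an embedding vertex by vertex -/

/-- Given that `P j` tells whether a vertex of a host graph is adjacent to the image of `j`, the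
vertex fits step `i` if its adjacencies to the images of all earlier `j < i` are those of `i`. -/
def Fits {k : ℕ} (H : SimpleGraph (Fin k)) (P : Fin k → Prop) (i : Fin k) : Prop :=
  ∀ j < i, (P j ↔ H.Adj j i)

theorem fits_zero {k : ℕ} [NeZero k] (H : SimpleGraph (Fin k)) (P : Fin k → Prop) : Fits H P 0 :=
  fun _ hj => absurd hj (Fin.not_lt_zero _)

open Classical in
/-- The possible images of `i` once the vertices before `i` have been mapped by `f`. It depends
only on the values of `f` before `i`. -/
def candidates [Fintype V] {k : ℕ} (G : SimpleGraph V) (H : SimpleGraph (Fin k)) (f : Fin k → V)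
    (i : Fin k) : Finset V :=
  {v | Fits H (fun j => G.Adj (f j) v) i}

theorem mem_candidates [Fintype V] {k : ℕ} {G : SimpleGraph V} {H : SimpleGraph (Fin k)}
    {f : Fin k → V} {i : Fin k} {v : V} :
    v ∈ candidates G H f i ↔ Fits H (fun j => G.Adj (f j) v) i := by
  simp [candidates]

theorem apply_mem_candidates [Fintype V] {k : ℕ} {G : SimpleGraph V} {H : SimpleGraph (Fin k)}
    (f : H ↪g G) (a : H ≃g H) (i : Fin k) : f (a i) ∈ candidates G H (f ∘ a) i :=
  mem_candidates.2 fun _ _ => f.map_adj_iff.trans a.map_adj_iff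

theorem sum_embedding_prod_inv_card_candidates_le_one [Fintype V] {k : ℕ} (G : SimpleGraph V)
    {H : SimpleGraph (Fin k)} [Fintype (H ↪g G)] (a : H ≃g H) :
    ∑ f : H ↪g G, ∏ i, (#(candidates G H (f ∘ a) i) : ℝ)⁻¹ ≤ 1 := by
  classical
  let weight (f : Fin k → V) : ℝ :=
    ∏ i, if f i ∈ candidates G H f i then (#(candidates G H f i) : ℝ)⁻¹ else 0
  have comp_injective : Function.Injective fun f : H ↪g G => (f ∘ a : Fin k → V) :=
    a.surjective.injective_comp_right.comp DFunLike.coe_injective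
  calc
    ∑ f : H ↪g G, ∏ i, (#(candidates G H (f ∘ a) i) : ℝ)⁻¹
      = ∑ f : H ↪g G, weight (f ∘ a) := by
        simp [weight, apply_mem_candidates]
    _ ≤ ∑ f, weight f := by
        rw [← sum_image (f := weight) comp_injective.injOn]
        exact sum_le_sum_of_subset_of_nonneg (subset_univ _) fun f _ _ => by positivity
    _ ≤ 1 := by
        refine sum_prod_ite_mem_inv_card_le_one (fun i f => candidates G H f i)
          fun i f g hfg => ?_
        ext v
        simp +contextual [mem_candidates, Fits, hfg]

open Classical in
theorem sum_weight_mul_card_candidates_le [Fintype V] {k : ℕ} {σ : Type*} [Fintype σ]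
    (G : SimpleGraph V) {H : SimpleGraph (Fin k)} {ρ : σ → (H ≃g H)} {w : Fin k → ℝ} {c : ℝ}
    (hw : ∀ P : Fin k → Prop, ∑ s, ∑ i, (if Fits H (P ∘ ρ s) i then w i else 0) ≤ c)
    (f : Fin k → V) :
    ∑ s, ∑ i, w i * #(candidates G H (f ∘ ρ s) i) ≤ c * Fintype.card V :=
  calc
    ∑ s, ∑ i, w i * #(candidates G H (f ∘ ρ s) i)
      = ∑ s, ∑ i, ∑ v, (if Fits H ((fun j => G.Adj (f j) v) ∘ ρ s) i then w i else 0) := by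
        simp [← sum_filter, candidates, mul_comm, Function.comp_def]
    _ = ∑ v, ∑ s, ∑ i, (if Fits H ((fun j => G.Adj (f j) v) ∘ ρ s) i then w i else 0) := by
        rw [sum_comm (s := (univ : Finset V))]
        exact sum_congr rfl fun s _ => sum_comm
    _ ≤ ∑ _v : V, c := sum_le_sum fun v _ => hw _
    _ = c * Fintype.card V := by simp [mul_comm]

open Classical in
theorem card_le_pow_mul_sum_prod_weight_mul_card_candidates_inv [Fintype V] {k : ℕ} [NeZero k]
    {σ : Type*} [Fintype σ] {G : SimpleGraph V} {H : SimpleGraph (Fin k)} {ρ : σ → (H ≃g H)}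
    {w : Fin k → ℝ} (hw₀ : ∀ i, 0 < w i)
    (hw : ∀ P : Fin k → Prop,
      ∑ s, ∑ i, (if Fits H (P ∘ ρ s) i then w i else 0) ≤ Fintype.card σ)
    (f : H ↪g G) :
    Fintype.card σ ≤ ((Fintype.card V : ℝ) / k) ^ k *
      ∑ s, ∏ i, (w i * #(candidates G H (f ∘ ρ s) i))⁻¹ := by
  have hV : 0 < (Fintype.card V : ℝ) := Nat.cast_pos.2 (Fintype.card_pos_iff.2 ⟨f 0⟩)
  have hk : 0 < (k : ℝ) := Nat.cast_pos.2 (NeZero.pos k)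
  have card_pos s i : 0 < (#(candidates G H (f ∘ ρ s) i) : ℝ) :=
    Nat.cast_pos.2 (card_pos.2 ⟨_, apply_mem_candidates f (ρ s) i⟩)
  have average_le : ∑ s, ∑ i, w i * #(candidates G H (f ∘ ρ s) i) ≤
      Fintype.card σ * (Fintype.card (Fin k) * (Fintype.card V / k : ℝ)) := by
    rw [Fintype.card_fin, mul_div_cancel₀ _ hk.ne']
    exact sum_weight_mul_card_candidates_le G hw f
  simpa only [Fintype.card_fin] using
    card_le_pow_mul_sum_prod_inv (fun s i => mul_pos (hw₀ i) (card_pos s i)) (div_pos hV hk)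
      average_le

open Classical in
theorem card_embedding_mul_le [Fintype V] {k : ℕ} [NeZero k] {σ : Type*} [Fintype σ] [Nonempty σ]
    (G : SimpleGraph V) {H : SimpleGraph (Fin k)} {ρ : σ → (H ≃g H)} {w : Fin k → ℝ}
    (hw₀ : ∀ i, 0 < w i)
    (hw : ∀ P : Fin k → Prop,
      ∑ s, ∑ i, (if Fits H (P ∘ ρ s) i then w i else 0) ≤ Fintype.card σ) :
    Nat.card (H ↪g G) * ((∏ i, w i) * k ^ k) ≤ (Fintype.card V : ℝ) ^ k := by
  have : Finite (H ↪g G) := DFunLike.finite _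
  have := Fintype.ofFinite (H ↪g G)
  set n : ℝ := (Fintype.card V : ℝ)
  have hk : (0 : ℝ) < k := Nat.cast_pos.2 (NeZero.pos k)
  have hσ : (0 : ℝ) < Fintype.card σ := Nat.cast_pos.2 Fintype.card_pos
  set W := ∏ i, w i
  have hW : 0 < W := prod_pos fun i _ => hw₀ i
  let N (f : H ↪g G) (s : σ) (i : Fin k) : ℝ := #(candidates G H (f ∘ ρ s) i)
  have total : Nat.card (H ↪g G) * Fintype.card σ ≤ (n / k) ^ k * W⁻¹ * Fintype.card σ :=
    calc
      (Nat.card (H ↪g G) * Fintype.card σ : ℝ)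
        ≤ ∑ f : H ↪g G, (n / k) ^ k * ∑ s, ∏ i, (w i * N f s i)⁻¹ := by
          rw [Nat.card_eq_fintype_card, ← nsmul_eq_mul, ← card_univ, ← sum_const]
          exact sum_le_sum fun f _ =>
            card_le_pow_mul_sum_prod_weight_mul_card_candidates_inv hw₀ hw f
      _ = (n / k) ^ k * W⁻¹ * ∑ s, ∑ f, ∏ i, (N f s i)⁻¹ := by
          simp only [W, mul_inv, prod_mul_distrib, prod_inv_distrib, ← mul_sum, mul_assoc]
          rw [sum_comm]
      _ ≤ (n / k) ^ k * W⁻¹ * Fintype.card σ := by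
          gcongr
          exact (sum_le_sum fun s _ =>
            sum_embedding_prod_inv_card_candidates_le_one G (ρ s)).trans_eq (by simp)
  have := le_of_mul_le_mul_right total hσ
  rwa [div_pow, ← div_eq_mul_inv, div_div, le_div_iff₀ (by positivity), mul_comm _ W] at this

/-! ### The cycle -/

section Cycle

variable {n : ℕ}

theorem cycleGraph_adj_iff_of_lt {j i : Fin n} (hji : j < i) :
    (cycleGraph n).Adj j i ↔ (j : ℕ) + 1 = i ∨ (j : ℕ) = 0 ∧ (i : ℕ) + 1 = n := by
  rw [cycleGraph_adj', Fin.coe_sub_iff_lt.2 hji, Fin.sub_val_of_le hji.le]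
  omega

theorem two_mul_le_card_aut_cycleGraph (hn : 3 ≤ n) :
    2 * n ≤ Nat.card (cycleGraph n ≃g cycleGraph n) := by
  obtain ⟨m, rfl⟩ : ∃ m, n = m + 3 := ⟨n - 3, by omega⟩
  rw [cycleGraph_eq_circulantGraph]
  have one_add_one_ne_zero : (1 + 1 : Fin (m + 3)) ≠ 0 := by
    rw [Ne, Fin.ext_iff, Fin.val_add, Fin.val_one, Nat.mod_eq_of_lt (by omega)]
    exact two_ne_zero
  simpa using two_mul_card_le_card_aut_circulantGraph {(1 : Fin (m + 3))} ⟨1, one_add_one_ne_zero⟩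

/-- The automorphism of the cycle that moves the starting point `0` to `s`. -/
def cycleRotation [NeZero n] (s : Fin n) : cycleGraph n ≃g cycleGraph n where
  toEquiv := Equiv.addLeft s
  map_rel_iff' := by simp [cycleGraph_adj']

@[simp]
theorem cycleRotation_apply [NeZero n] (s j : Fin n) : cycleRotation s j = s + j := rfl

/-- The weight of the candidate count of step `i` for the cycle on `n + 1` vertices. Every vertex
is a candidate at step `0`, so this step gets total weight `1` over the `n + 1` starting points.
A vertex fits at most one step strictly between the first and the last one, and only if it is
adjacent to the previous image. Halving the weights of steps `1` and `2` pays for step `0` and for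
the at most one starting point from which the vertex fits the last step. -/
def cycleWeight (i : Fin (n + 1)) : ℝ :=
  if (i : ℕ) = 0 then ((n + 1 : ℕ) : ℝ)⁻¹ else if (i : ℕ) ≤ 2 then 1 / 2 else 1

theorem cycleWeight_pos (i : Fin (n + 1)) : 0 < cycleWeight i := by
  unfold cycleWeight
  positivity

theorem cycleWeight_zero : cycleWeight (0 : Fin (n + 1)) = ((n + 1 : ℕ) : ℝ)⁻¹ := if_pos rfl

theorem cycleWeight_le_one (i : Fin (n + 1)) : cycleWeight i ≤ 1 := by
  unfold cycleWeight
  split_ifs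
  · exact Nat.cast_inv_le_one _
  · norm_num
  · rfl

theorem prod_cycleWeight (hn : 2 ≤ n) :
    ∏ i : Fin (n + 1), cycleWeight i = (4 * ((n + 1 : ℕ) : ℝ))⁻¹ := by
  obtain ⟨m, rfl⟩ : ∃ m, n = m + 2 := ⟨n - 2, by omega⟩
  simp only [Fin.prod_univ_succ, cycleWeight, Fin.val_zero, Fin.val_succ]
  norm_num

/-- A vertex whose neighbourhood in the image of `H` is described by `P` behaves as the image of
`c` does, its adjacency to the image of `c` itself being arbitrary. -/
def IsTwin (H : SimpleGraph W) (P : W → Prop) (c : W) : Prop :=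
  ∀ x ≠ c, (P x ↔ H.Adj x c)

theorem fits_last_comp_iff_isTwin {H : SimpleGraph (Fin (n + 1))} {P : Fin (n + 1) → Prop}
    (a : H ≃g H) : Fits H (P ∘ a) (Fin.last n) ↔ IsTwin H P (a (Fin.last n)) := by
  rw [IsTwin, a.surjective.forall]
  simp only [Fits, Fin.lt_last_iff_ne_last, a.injective.ne_iff, a.map_adj_iff,
    Function.comp_apply]

theorem fits_cycleGraph_iff_of_lt_last {Q : Fin (n + 1) → Prop} {i : Fin (n + 1)}
    (hi : i < Fin.last n) :
    Fits (cycleGraph (n + 1)) Q i ↔ ∀ j < i, (Q j ↔ (j : ℕ) + 1 = i) := by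
  refine forall₂_congr fun j hj => ?_
  have hi : (i : ℕ) < n := hi
  rw [cycleGraph_adj_iff_of_lt hj, or_iff_left (by omega)]

theorem exists_pred_of_fits_cycleGraph {Q : Fin (n + 1) → Prop} {i : Fin (n + 1)} (hi : i ≠ 0)
    (h : Fits (cycleGraph (n + 1)) Q i) : ∃ j : Fin (n + 1), (j : ℕ) + 1 = i ∧ Q j := by
  obtain ⟨j, rfl⟩ := Fin.exists_succ_eq.2 hi
  exact ⟨j.castSucc, by simp, (h _ j.castSucc_lt_succ).2
    ((cycleGraph_adj_iff_of_lt j.castSucc_lt_succ).2 (.inl (by simp)))⟩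

theorem le_of_fits_cycleGraph {Q : Fin (n + 1) → Prop} {i j : Fin (n + 1)}
    (hi : i < Fin.last n) (h : Fits (cycleGraph (n + 1)) Q i) (hj : Q j) :
    (i : ℕ) ≤ (j : ℕ) + 1 := by
  by_contra! hlt
  have := ((fits_cycleGraph_iff_of_lt_last hi).1 h j (Fin.lt_def.2 (by omega))).1 hj
  omega

theorem eq_of_fits_cycleGraph {Q : Fin (n + 1) → Prop} {i i' : Fin (n + 1)}
    (hi₀ : i ≠ 0) (hi : i < Fin.last n) (h : Fits (cycleGraph (n + 1)) Q i)
    (hi₀' : i' ≠ 0) (hi' : i' < Fin.last n) (h' : Fits (cycleGraph (n + 1)) Q i') : i = i' := by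
  obtain ⟨j, hj, hQj⟩ := exists_pred_of_fits_cycleGraph hi₀ h
  obtain ⟨j', hj', hQj'⟩ := exists_pred_of_fits_cycleGraph hi₀' h'
  have := le_of_fits_cycleGraph hi h hQj'
  have := le_of_fits_cycleGraph hi' h' hQj
  exact Fin.ext (by omega)

open Classical in
theorem cycleWeight_le_of_fits {Q : Fin (n + 1) → Prop} {i : Fin (n + 1)}
    (hi₀ : i ≠ 0) (hi : i < Fin.last n) (h : Fits (cycleGraph (n + 1)) Q i) :
    cycleWeight i ≤ 1 - if Q 0 ∨ Q 1 then 1 / 2 else 0 := by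
  have i_le_two : Q 0 ∨ Q 1 → (i : ℕ) ≤ 2 := by
    rintro (hQ | hQ) <;> have := le_of_fits_cycleGraph hi h hQ
    · rw [Fin.val_zero] at this
      omega
    · have := Fin.val_one' (n + 1) ▸ Nat.mod_le 1 (n + 1)
      omega
  rw [cycleWeight, if_neg (Fin.val_ne_zero_iff.2 hi₀)]
  by_cases hQ : Q 0 ∨ Q 1
  · rw [if_pos (i_le_two hQ), if_pos hQ]
    norm_num
  · rw [if_neg hQ]
    split_ifs <;> norm_num

open Classical in
theorem sum_cycleWeight_inner_le (Q : Fin (n + 1) → Prop) :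
    ∑ i with i ≠ 0 ∧ i < Fin.last n ∧ Fits (cycleGraph (n + 1)) Q i, cycleWeight i ≤
      1 - if Q 0 ∨ Q 1 then 1 / 2 else 0 := by
  set inner : Finset (Fin (n + 1)) :=
    {i | i ≠ 0 ∧ i < Fin.last n ∧ Fits (cycleGraph (n + 1)) Q i}
  have card_inner : #inner ≤ 1 := card_le_one.2 fun i hi i' hi' => by
    obtain ⟨hi₀, hi, h⟩ := (mem_filter.1 hi).2
    obtain ⟨hi₀', hi', h'⟩ := (mem_filter.1 hi').2
    exact eq_of_fits_cycleGraph hi₀ hi h hi₀' hi' h'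
  set b : ℝ := 1 - if Q 0 ∨ Q 1 then 1 / 2 else 0 with b_def
  have hb : 0 ≤ b := by rw [b_def]; split_ifs <;> norm_num
  calc
    ∑ i ∈ inner, cycleWeight i ≤ #inner • b := sum_le_card_nsmul _ _ _ fun i hi => by
      obtain ⟨hi₀, hi, h⟩ := (mem_filter.1 hi).2
      exact cycleWeight_le_of_fits hi₀ hi h
    _ ≤ b := by
      rw [nsmul_eq_mul]
      exact mul_le_of_le_one_left hb (Nat.cast_le_one.2 card_inner)

open Classical in
theorem sum_ite_fits_cycleWeight_le (Q : Fin (n + 1) → Prop) :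
    ∑ i, (if Fits (cycleGraph (n + 1)) Q i then cycleWeight i else 0) ≤
      ((n + 1 : ℕ) : ℝ)⁻¹ + (1 - if Q 0 ∨ Q 1 then 1 / 2 else 0) +
        if Fits (cycleGraph (n + 1)) Q (Fin.last n) then 1 else 0 := by
  set inner : Finset (Fin (n + 1)) :=
    {i | i ≠ 0 ∧ i < Fin.last n ∧ Fits (cycleGraph (n + 1)) Q i}
  have split_at_ends (i : Fin (n + 1)) :
      (if Fits (cycleGraph (n + 1)) Q i then cycleWeight i else 0) ≤
        (if i = 0 then ((n + 1 : ℕ) : ℝ)⁻¹ else 0) + (if i ∈ inner then cycleWeight i else 0) +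
          if i = Fin.last n then (if Fits (cycleGraph (n + 1)) Q i then 1 else 0) else 0 := by
    have weight_nonneg := (cycleWeight_pos i).le
    by_cases h : Fits (cycleGraph (n + 1)) Q i
    · rw [if_pos h, if_pos h]
      rcases eq_or_ne i 0 with rfl | hi₀
      · rw [if_pos rfl, cycleWeight_zero, add_assoc]
        exact le_add_of_nonneg_right (add_nonneg (by positivity) (by positivity))
      · rcases (Fin.le_last i).eq_or_lt with hi | hi
        · rw [if_pos hi]
          exact (cycleWeight_le_one i).trans (le_add_of_nonneg_left (by positivity))
        · rw [if_neg hi₀, if_pos (mem_filter.2 ⟨mem_univ i, hi₀, hi, h⟩), if_neg hi.ne, zero_add,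
            add_zero]
    · rw [if_neg h]
      positivity
  calc
    ∑ i, (if Fits (cycleGraph (n + 1)) Q i then cycleWeight i else 0)
      ≤ _ := sum_le_sum fun i _ => split_at_ends i
    _ = ((n + 1 : ℕ) : ℝ)⁻¹ + ∑ i ∈ inner, cycleWeight i +
          if Fits (cycleGraph (n + 1)) Q (Fin.last n) then 1 else 0 := by
      simp only [sum_add_distrib, sum_ite_eq', mem_univ, if_true, sum_ite_mem, univ_inter]
    _ ≤ _ := by
      gcongr
      exact sum_cycleWeight_inner_le Q

open Classical in
theorem sum_ite_fits_cycleWeight_of_forall_not {Q : Fin (n + 1) → Prop} (hQ : ∀ j, ¬ Q j) :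
    ∑ i, (if Fits (cycleGraph (n + 1)) Q i then cycleWeight i else 0) = ((n + 1 : ℕ) : ℝ)⁻¹ := by
  have not_fits i (hi : i ≠ 0) : ¬ Fits (cycleGraph (n + 1)) Q i := fun h =>
    have ⟨j, _, hj⟩ := exists_pred_of_fits_cycleGraph hi h
    hQ j hj
  rw [sum_eq_single 0 (fun i _ hi => if_neg (not_fits i hi)) (by simp), if_pos (fits_zero _ _),
    cycleWeight_zero]

theorem IsTwin.add_one_and_sub_one {P : Fin (n + 1) → Prop} {c : Fin (n + 1)} (hn : 1 ≤ n)
    (h : IsTwin (cycleGraph (n + 1)) P c) : P (c + 1) ∧ P (c - 1) := by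
  obtain ⟨n, rfl⟩ : ∃ m, n = m + 1 := ⟨n - 1, by omega⟩
  exact ⟨(h _ (by simp)).2 (by simp [cycleGraph_adj]), (h _ (by simp)).2 (by simp [cycleGraph_adj])⟩

open scoped Fin.CommRing in
theorem eq_of_isTwin_cycleGraph (hn : 4 ≤ n) {P : Fin (n + 1) → Prop} {c c' : Fin (n + 1)}
    (h : IsTwin (cycleGraph (n + 1)) P c) (h' : IsTwin (cycleGraph (n + 1)) P c') : c = c' := by
  obtain ⟨n, rfl⟩ : ∃ m, n = m + 1 := ⟨n - 1, by omega⟩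
  have natCast_ne_zero (m : ℕ) (hm : 0 < m) (hm' : m < 5) : (m : Fin (n + 1 + 1)) ≠ 0 := by
    rw [Ne, Fin.natCast_eq_zero]
    exact Nat.not_dvd_of_pos_of_lt hm (by omega)
  have P_subset {x} (hx : P x) : x = c ∨ x = c + 1 ∨ x = c - 1 := by
    by_cases hxc : x = c
    · exact .inl hxc
    · obtain h1 | h1 := cycleGraph_adj.1 ((h x hxc).1 hx)
      · exact .inr (.inl (by linear_combination h1))
      · exact .inr (.inr (by linear_combination -h1))
  obtain ⟨P_add_one, P_sub_one⟩ := h'.add_one_and_sub_one (by omega)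
  have two_ne : (2 : Fin (n + 1 + 1)) ≠ 0 := natCast_ne_zero 2 (by simp) (by simp)
  have three_ne : (3 : Fin (n + 1 + 1)) ≠ 0 := natCast_ne_zero 3 (by simp) (by simp)
  have four_ne : (4 : Fin (n + 1 + 1)) ≠ 0 := natCast_ne_zero 4 (by simp) (by simp)
  rcases P_subset P_add_one with e | e | e
  · rcases P_subset P_sub_one with e' | e' | e'
    · exact absurd (by linear_combination e - e') two_ne
    · exact absurd (by linear_combination e - e') three_ne
    · linear_combination -e'
  · linear_combination -e
  · rcases P_subset P_sub_one with e' | e' | e'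
    · exact absurd (by linear_combination e - e') three_ne
    · exact absurd (by linear_combination e - e') four_ne
    · linear_combination -e'

open Classical in
open scoped Fin.CommRing in
theorem two_mul_card_isTwin_cycleGraph_add_two_le (hn : 4 ≤ n) {P : Fin (n + 1) → Prop}
    (hP : ∃ t, P t) :
    2 * #{c | IsTwin (cycleGraph (n + 1)) P c} + 2 ≤ #{s | P s ∨ P (s + 1)} := by
  obtain ⟨n, rfl⟩ : ∃ m, n = m + 1 := ⟨n - 1, by omega⟩
  rcases (univ.filter (IsTwin (cycleGraph (n + 1 + 1)) P)).eq_empty_or_nonempty with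
    no_twin | ⟨c, hc⟩
  · obtain ⟨t, ht⟩ := hP
    have : ({t - 1, t} : Finset (Fin (n + 1 + 1))) ⊆ univ.filter fun s => P s ∨ P (s + 1) := by
      simp [insert_subset_iff, ht]
    have := card_le_card this
    rw [card_pair (by simp)] at this
    simpa [no_twin] using this
  · have card_twin : #{c | IsTwin (cycleGraph (n + 1 + 1)) P c} ≤ 1 :=
      card_le_one.2 fun c hc c' hc' =>
        eq_of_isTwin_cycleGraph hn (mem_filter.1 hc).2 (mem_filter.1 hc').2
    obtain ⟨P_add_one, P_sub_one⟩ := (mem_filter.1 hc).2.add_one_and_sub_one (by omega)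
    have : 4 ≤ #{s | P s ∨ P (s + 1)} := by
      refine le_card_of_inj_on_range (fun j => c - 2 + (j : Fin (n + 1 + 1))) (fun j hj => ?_)
        fun i hi j hj hij => ?_
      · rw [mem_filter_univ]
        interval_cases j
        · right; convert P_sub_one using 1; push_cast; ring
        · left; convert P_sub_one using 1; push_cast; ring
        · right; convert P_add_one using 1; push_cast; ring
        · left; convert P_add_one using 1; push_cast; ring
      · exact CharP.natCast_injOn_Iio (Fin (n + 1 + 1)) (n + 1 + 1) (Set.mem_Iio.2 (by omega))
          (Set.mem_Iio.2 (by omega)) (add_left_cancel hij)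
    omega

open Classical in
theorem sum_sum_ite_fits_comp_cycleRotation_le (hn : 4 ≤ n) (P : Fin (n + 1) → Prop) :
    ∑ s, ∑ i, (if Fits (cycleGraph (n + 1)) (P ∘ cycleRotation s) i then cycleWeight i else 0) ≤
      Fintype.card (Fin (n + 1)) := by
  have sum_inv : ∑ _s : Fin (n + 1), ((n + 1 : ℕ) : ℝ)⁻¹ = 1 := by
    rw [sum_const, card_univ, Fintype.card_fin, nsmul_eq_mul]
    exact mul_inv_cancel₀ (by positivity)
  by_cases hP : ∃ t, P t
  · have card_fits : #{s | Fits (cycleGraph (n + 1)) (P ∘ cycleRotation s) (Fin.last n)} ≤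
        #{c | IsTwin (cycleGraph (n + 1)) P c} :=
      card_le_card_of_injOn (· + Fin.last n)
        (fun s hs => by simpa [fits_last_comp_iff_isTwin] using hs) (add_left_injective _).injOn
    have card_near : (2 * #{s | Fits (cycleGraph (n + 1)) (P ∘ cycleRotation s) (Fin.last n)} +
        2 : ℝ) ≤ #{s | P s ∨ P (s + 1)} := by
      have := two_mul_card_isTwin_cycleGraph_add_two_le hn hP
      exact_mod_cast (by omega)
    calc
      ∑ s, ∑ i, (if Fits (cycleGraph (n + 1)) (P ∘ cycleRotation s) i then cycleWeight i else 0)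
        ≤ ∑ s, (((n + 1 : ℕ) : ℝ)⁻¹ + (1 - if P s ∨ P (s + 1) then 1 / 2 else 0) +
            if Fits (cycleGraph (n + 1)) (P ∘ cycleRotation s) (Fin.last n) then 1 else 0) :=
          sum_le_sum fun s _ => by
            simpa using sum_ite_fits_cycleWeight_le (P ∘ cycleRotation s)
      _ = 1 + (Fintype.card (Fin (n + 1)) - #{s | P s ∨ P (s + 1)} / 2) +
            #{s | Fits (cycleGraph (n + 1)) (P ∘ cycleRotation s) (Fin.last n)} := by
          simp only [sum_add_distrib, sum_sub_distrib, sum_inv, ← sum_filter, sum_const, card_univ,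
            nsmul_eq_mul, mul_one, mul_one_div]
      _ ≤ Fintype.card (Fin (n + 1)) := by linarith
  · push Not at hP
    calc
      ∑ s, ∑ i, (if Fits (cycleGraph (n + 1)) (P ∘ cycleRotation s) i then cycleWeight i else 0)
        = ∑ _s : Fin (n + 1), ((n + 1 : ℕ) : ℝ)⁻¹ :=
          sum_congr rfl fun s _ => sum_ite_fits_cycleWeight_of_forall_not fun j => hP _
      _ = 1 := sum_inv
      _ ≤ Fintype.card (Fin (n + 1)) := by simp

end Cycle

theorem card_induce_cycleGraph_mul_pow_le [Fintype V] (G : SimpleGraph V) {k : ℕ} (hk : 5 ≤ k) :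
    (Nat.card {S : Set V // Nonempty (G.induce S ≃g cycleGraph k)} : ℝ) * k ^ k ≤
      2 * (Fintype.card V : ℝ) ^ k := by
  obtain ⟨n, rfl⟩ : ∃ n, k = n + 1 := ⟨k - 1, by omega⟩
  have embeddings := card_embedding_mul_le G (cycleWeight_pos (n := n))
    (sum_sum_ite_fits_comp_cycleRotation_le (by omega))
  rw [prod_cycleWeight (by omega), ← card_mul_card_aut_eq_card_embedding] at embeddings
  have aut : (2 * (n + 1 : ℕ) : ℝ) ≤ Nat.card (cycleGraph (n + 1) ≃g cycleGraph (n + 1)) := by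
    exact_mod_cast two_mul_le_card_aut_cycleGraph (by omega)
  rw [Nat.cast_mul, inv_mul_eq_div, mul_div_assoc', div_le_iff₀ (by positivity)] at embeddings
  refine le_of_mul_le_mul_right ?_ (by positivity : (0 : ℝ) < 2 * (n + 1 : ℕ))
  set copies := Nat.card {S : Set V // Nonempty (G.induce S ≃g cycleGraph (n + 1))}
  calc
    (copies * (n + 1 : ℕ) ^ (n + 1) * (2 * (n + 1 : ℕ)) : ℝ)
      ≤ copies * (n + 1 : ℕ) ^ (n + 1) *
          Nat.card (cycleGraph (n + 1) ≃g cycleGraph (n + 1)) := by gcongr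
    _ = copies * Nat.card (cycleGraph (n + 1) ≃g cycleGraph (n + 1)) * (n + 1 : ℕ) ^ (n + 1) := by
      ring
    _ ≤ (Fintype.card V : ℝ) ^ (n + 1) * (4 * (n + 1 : ℕ)) := embeddings
    _ = 2 * (Fintype.card V : ℝ) ^ (n + 1) * (2 * (n + 1 : ℕ)) := by ring

end

/-- For every integer `k ≥ 5`, the inducibility of the cycle `C_k` is at most
`2 · k! / k^k`: for every `ε > 0` there exists `N` such that for all `n ≥ N`, every `n`-vertex
graph `G` satisfies `i(C_k, G) ≤ (2 + ε) · k! / k^k`, where `i(C_k, G)` is the number of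
induced copies of `C_k` in `G` divided by `(n choose k)`. -/
theorem inducibility_cycle_le (k : ℕ) (hk : 5 ≤ k) (ε : ℝ) (hε : 0 < ε) :
    ∃ N : ℕ, ∀ n : ℕ, N ≤ n → ∀ (V : Type) [Fintype V], Fintype.card V = n →
      ∀ G : SimpleGraph V,
        (Nat.card {S : Set V // Nonempty (G.induce S ≃g SimpleGraph.cycleGraph k)} : ℝ)
            / (n.choose k)
          ≤ (2 + ε) * (Nat.factorial k) / k ^ k := by
  obtain ⟨N, hN⟩ := eventually_atTop.1
    (eventually_mul_pow_le_factorial_mul_choose k (c := 2 / (2 + ε))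
      ((div_lt_one (by positivity)).2 (by linarith)))
  refine ⟨N, fun n hn V _ hV G => div_le_of_le_mul₀ (by positivity) (by positivity) ?_⟩
  have copies := card_induce_cycleGraph_mul_pow_le G hk
  rw [hV, ← le_div_iff₀ (by positivity)] at copies
  have choose_large := hN n hn
  calc
    (Nat.card {S : Set V // Nonempty (G.induce S ≃g cycleGraph k)} : ℝ)
      ≤ 2 * (n : ℝ) ^ k / k ^ k := copies
    _ = (2 + ε) * (2 / (2 + ε) * (n : ℝ) ^ k) / k ^ k := by field_simp
    _ ≤ (2 + ε) * (k ! * n.choose k) / k ^ k := by gcongr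
    _ = (2 + ε) * k ! / k ^ k * n.choose k := by ring
end

section
/- Let G be a graph on n vertices, k ≥ 5 an integer, and let v_1 v_2 ⋯ v_k be an induced cycle of length k in G. For j = 1, ..., k, let D_j = (v_j, v_{j−1}, v_{j+1}, v_{j+2}, ..., v_{j+k−2}) (indices modulo k) and let n_{j,i} denote the quantity n_i in the definition of the weight w(D_j). Then ∑_{j=1}^{k} ( n_{j,2}/2 + n_{j,3}/2 + n_{j,4} + ⋯ + n_{j,k} ) ≤ n(k−1). -/
open Finset
open scoped Classical

/-- Index transposition swapping 0 and 1. -/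
def swap01 (i : ℕ) : ℕ := if i = 0 then 1 else if i = 1 then 0 else i

/-- `y 0, y 1, …, y (k-1)` is an induced cycle of length `k` in `G`. -/
def IsInducedCycle {V : Type*} (G : SimpleGraph V) (k : ℕ) (y : ℕ → V) : Prop :=
  (∀ i < k, ∀ j < k, y i = y j → i = j) ∧
  ∀ i < k, ∀ j < k, (G.Adj (y i) (y j) ↔ (i + 1) % k = j ∨ (j + 1) % k = i)

/-- `y 0, y 1, …, y (m-1)` is an induced path on `m` vertices in `G`. -/
def IsInducedPath {V : Type*} (G : SimpleGraph V) (m : ℕ) (y : ℕ → V) : Prop :=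
  (∀ i < m, ∀ j < m, y i = y j → i = j) ∧
  ∀ i < m, ∀ j < m, (G.Adj (y i) (y j) ↔ i + 1 = j ∨ j + 1 = i)

/-- `(z 0, …, z (k-1))` is a good k-tuple: `z 1, z 0, z 2, …, z (k-1)` is an induced cycle. -/
def IsGoodTuple {V : Type*} (G : SimpleGraph V) (k : ℕ) (z : ℕ → V) : Prop :=
  IsInducedCycle G k (fun i => z (swap01 i))

/-- The sequence `z 1, z 0, z 2, …, z (i-2), x` of length `i`. -/
def extSeq {V : Type*} (z : ℕ → V) (i : ℕ) (x : V) : ℕ → V :=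
  fun p => if p = i - 1 then x else z (swap01 p)

/-- The quantity `n_i` associated with the (prefix of the) tuple `z`. -/
noncomputable def nq {V : Type*} (G : SimpleGraph V) (k : ℕ) (z : ℕ → V) (i : ℕ) : ℕ :=
  if i = 1 then Nat.card V
  else if i = 2 then Nat.card {x : V // G.Adj (z 0) x}
  else if i = 3 then Nat.card {x : V // G.Adj (z 0) x ∧ ¬ G.Adj (z 1) x}
  else if i < k then Nat.card {x : V // IsInducedPath G i (extSeq z i x)}
  else Nat.card {x : V // IsInducedCycle G k (extSeq z k x)}

/-- The weight `w(D) = ∏_{i=1}^k 1/n_i` of a tuple. -/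
noncomputable def wt {V : Type*} (G : SimpleGraph V) (k : ℕ) (z : ℕ → V) : ℝ :=
  ∏ i ∈ Finset.Icc 1 k, ((nq G k z i : ℝ))⁻¹

/-- View a `Fin k`-tuple as an `ℕ`-indexed tuple. -/
def tupFun {V : Type*} {k : ℕ} (hk : 0 < k) (z : Fin k → V) : ℕ → V :=
  fun i => z ⟨i % k, Nat.mod_lt i hk⟩

/-- The good tuple `D_j = (v_j, v_{j-1}, v_{j+1}, …, v_{j+k-2})` (0-indexed `j`, indices mod `k`). -/
def Dtup {V : Type*} (k : ℕ) (v : ℕ → V) (j : ℕ) : ℕ → V :=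
  fun p => if p = 0 then v (j % k)
    else if p = 1 then v ((j + k - 1) % k)
    else v ((j + p - 1) % k)

/-!
Fix a vertex `x` and let `A ⊆ ℤ/k` be the set of positions of its neighbors on `v`. If `x` is
counted by `n_{j,i}` with `3 ≤ i < k`, then the walk `v_{j-1}, v_j, v_{j+1}, …` first meets a
neighbor of `x` after exactly `i - 2` steps, and `n_{j,2}` likewise corresponds to `0` steps for the
walk started at `v_j`. Write `h_d` for the number of starting points whose first hit comes after
`d` steps, and `c` for the number of `j` such that `x` is counted by `n_{j,k}`. Then `x` contributes
at most `h_0 / 2 + h_1 / 2 + h_2 + ⋯ + h_{k-3} + c` to the sum. As `h_0 + h_1 + h_2 + ⋯ ≤ k`, it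
remains to see that `h_0 + h_1 ≥ 2 + 2c` if `A` is nonempty. Now `h_0 + h_1` counts the `t` with
`t ∈ A` or `t + 1 ∈ A`. There are at least two of them; and if `c ≠ 0`, then `A` is `{t - 2, t}` or
`{t - 2, t - 1, t}` for some `t`, so `c = 1` because `k ≥ 5`, and `t - 3, …, t` are four of them.
-/

/-- The points of `ZMod k` from which the walk `t, t + 1, t + 2, …` first meets `A` after exactly
`d` steps. -/
noncomputable def firstHitAfter {k : ℕ} [NeZero k] (A : Set (ZMod k)) (d : ℕ) : Finset (ZMod k) :=
  {t | IsLeast {p : ℕ | t + p ∈ A} d}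

/-- The points `t` such that `A` is `{t - 2, t}` or `{t - 2, t - 1, t}`. When `A` marks the
neighbors of a vertex `x` on a cycle, these are the `t` for which replacing the vertex at `t - 1` by
`x` can give an induced cycle. -/
noncomputable def closingPoints {k : ℕ} [NeZero k] (A : Set (ZMod k)) : Finset (ZMod k) :=
  {t | t ∈ A ∧ t - 2 ∈ A ∧ ∀ s ∈ A, ∃ i : ℕ, i ≤ 2 ∧ s = t - i}

/-- The positions on the closed sequence `v 0, …, v (k - 1)` of the neighbors of `x`. -/
def contacts {V : Type*} (G : SimpleGraph V) (k : ℕ) (v : ℕ → V) (x : V) : Set (ZMod k) :=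
  {t | G.Adj (v t.val) x}

section Cyclic

variable {k : ℕ}

lemma sub_natCast_injOn (t : ZMod k) : Set.InjOn (fun i : ℕ => t - i) (Set.Iio k) :=
  fun _ hi _ hj hij => CharP.natCast_injOn_Iio (ZMod k) k hi hj (sub_right_injective hij)

variable [NeZero k]

lemma sum_range_natCast {M : Type*} [AddCommMonoid M] (f : ZMod k → M) :
    ∑ j ∈ range k, f j = ∑ t, f t := by
  refine sum_nbij (↑) (by simp) ?_ ?_ (by simp)
  · simpa using CharP.natCast_injOn_Iio (ZMod k) k
  · exact fun t _ => ⟨t.val, by simpa using ZMod.val_lt t, ZMod.natCast_zmod_val t⟩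

variable {A : Set (ZMod k)} {t : ZMod k}

lemma mem_firstHitAfter {d : ℕ} :
    t ∈ firstHitAfter A d ↔ IsLeast {p : ℕ | t + p ∈ A} d := by
  simp [firstHitAfter]

lemma mem_firstHitAfter_zero : t ∈ firstHitAfter A 0 ↔ t ∈ A := by
  simp [mem_firstHitAfter, IsLeast, mem_lowerBounds]

lemma mem_firstHitAfter_one : t ∈ firstHitAfter A 1 ↔ t + 1 ∈ A ∧ t ∉ A := by
  simp only [mem_firstHitAfter, IsLeast, mem_lowerBounds, Set.mem_ofPred_eq, Nat.cast_one,
    Nat.one_le_iff_ne_zero]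
  refine and_congr_right fun _ => ⟨fun h ht => h 0 (by simpa using ht) rfl, ?_⟩
  rintro ht p hp rfl
  exact ht (by simpa using hp)

lemma mem_closingPoints :
    t ∈ closingPoints A ↔ t ∈ A ∧ t - 2 ∈ A ∧ ∀ s ∈ A, ∃ i : ℕ, i ≤ 2 ∧ s = t - i := by
  simp [closingPoints]

lemma sum_card_firstHitAfter_le (A : Set (ZMod k)) (D : Finset ℕ) :
    ∑ d ∈ D, #(firstHitAfter A d) ≤ k := by
  have hdisj : (D : Set ℕ).PairwiseDisjoint (firstHitAfter A) := fun d _ e _ hde =>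
    Finset.disjoint_left.2 fun _ hd he =>
      hde ((mem_firstHitAfter.1 hd).unique (mem_firstHitAfter.1 he))
  calc ∑ d ∈ D, #(firstHitAfter A d) = #(D.biUnion (firstHitAfter A)) := (card_biUnion hdisj).symm
    _ ≤ Fintype.card (ZMod k) := card_le_univ _
    _ = k := ZMod.card k

lemma le_card_firstHitAfter_zero_add_one {m : ℕ} (hm : m ≤ k)
    (h : ∀ i < m, t - (i : ℕ) ∈ A ∨ t - (i : ℕ) + 1 ∈ A) :
    m ≤ #(firstHitAfter A 0) + #(firstHitAfter A 1) := by
  have hinj : Set.InjOn (fun i : ℕ => t - i) (range m) :=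
    (sub_natCast_injOn t).mono fun i hi => (mem_range.1 hi).trans_le hm
  have hsub : (range m).image (fun i : ℕ => t - i) ⊆ firstHitAfter A 0 ∪ firstHitAfter A 1 := by
    simp only [image_subset_iff, mem_range, mem_union, mem_firstHitAfter_zero,
      mem_firstHitAfter_one]
    intro i hi
    have := h i hi
    tauto
  calc m = #((range m).image fun i : ℕ => t - i) := by rw [card_image_of_injOn hinj, card_range]
    _ ≤ #(firstHitAfter A 0 ∪ firstHitAfter A 1) := card_le_card hsub
    _ ≤ _ := card_union_le _ _

lemma card_closingPoints_le_one (hk : 5 ≤ k) : #(closingPoints A) ≤ 1 := by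
  refine card_le_one.2 fun s hs t ht => ?_
  rw [mem_closingPoints] at hs ht
  obtain ⟨i, hi, rfl⟩ := ht.2.2 s hs.1
  obtain ⟨j, hj, hij⟩ := ht.2.2 _ hs.2.1
  have hcast : t - (i + 2 : ℕ) = t - (j : ℕ) := by rw [← hij]; push_cast; ring
  have : i + 2 = j :=
    sub_natCast_injOn t (Set.mem_Iio.2 (by lia)) (Set.mem_Iio.2 (by lia)) hcast
  obtain rfl : i = 0 := by lia
  simp

lemma two_add_two_mul_card_closingPoints_le (hk : 5 ≤ k) (hA : A.Nonempty) :
    2 + 2 * #(closingPoints A) ≤ #(firstHitAfter A 0) + #(firstHitAfter A 1) := by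
  obtain hC | ⟨t, ht⟩ := (closingPoints A).eq_empty_or_nonempty
  · obtain ⟨s, hs⟩ := hA
    rw [hC, card_empty]
    refine le_card_firstHitAfter_zero_add_one (t := s) (by lia) fun i hi => ?_
    interval_cases i <;> simp [hs]
  · obtain ⟨ht₀, ht₂, -⟩ := mem_closingPoints.1 ht
    have hfour : 4 ≤ #(firstHitAfter A 0) + #(firstHitAfter A 1) := by
      refine le_card_firstHitAfter_zero_add_one (t := t) (by lia) fun i hi => ?_
      interval_cases i
      · simp [ht₀]
      · simp [ht₀]
      · simp [ht₂]
      · right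
        convert ht₂ using 1
        push_cast
        ring
    have := card_closingPoints_le_one (A := A) hk
    lia

lemma card_firstHitAfter_add_card_closingPoints_le (hk : 5 ≤ k) (A : Set (ZMod k)) {D : Finset ℕ}
    (hD : ∀ d ∈ D, 2 ≤ d) :
    #(firstHitAfter A 0) + #(firstHitAfter A 1)
      + 2 * (∑ d ∈ D, #(firstHitAfter A d) + #(closingPoints A)) ≤ 2 * (k - 1) := by
  obtain rfl | hA := A.eq_empty_or_nonempty
  · simp [firstHitAfter, closingPoints, IsLeast]
  · have hlower := two_add_two_mul_card_closingPoints_le hk hA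
    have hupper := sum_card_firstHitAfter_le A (insert 0 (insert 1 D))
    have h₁ : 1 ∉ D := fun h => absurd (hD 1 h) (by simp)
    have h₀ : 0 ∉ insert 1 D := by simpa using fun h => absurd (hD 0 h) (by simp)
    rw [sum_insert h₀, sum_insert h₁] at hupper
    lia

lemma sum_range_card_filter_sub_mem {V : Type*} [Fintype V] (S : V → Finset (ZMod k))
    (c : ZMod k) : ∑ j ∈ range k, #{x | (j : ZMod k) - c ∈ S x} = ∑ x, #(S x) :=
  calc ∑ j ∈ range k, #{x | (j : ZMod k) - c ∈ S x}
    _ = ∑ t, #{x | t - c ∈ S x} := sum_range_natCast fun t => #{x | t - c ∈ S x}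
    _ = ∑ t, #{x | t ∈ S x} := (Equiv.subRight c).sum_comp fun t => #{x | t ∈ S x}
    _ = ∑ x, #{t | t ∈ S x} :=
      sum_card_bipartiteAbove_eq_sum_card_bipartiteBelow fun t x => t ∈ S x
    _ = ∑ x, #(S x) := by simp

end Cyclic

section Counts

variable {V : Type*} {G : SimpleGraph V} {k : ℕ} {v : ℕ → V} {x : V} {j : ℕ}

lemma mem_contacts {t : ZMod k} : t ∈ contacts G k v x ↔ G.Adj (v t.val) x := Iff.rfl

lemma extSeq_sub_one (z : ℕ → V) (i : ℕ) (x : V) : extSeq z i x (i - 1) = x := if_pos rfl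

lemma IsInducedPath.adj_last_iff {y : ℕ → V} {m p : ℕ} (h : IsInducedPath G (m + 2) y)
    (hp : p ≤ m) : G.Adj (y p) (y (m + 1)) ↔ p = m := by
  rw [h.2 p (by lia) (m + 1) (by lia)]
  lia

lemma IsInducedCycle.adj_last_iff {y : ℕ → V} {p : ℕ} (h : IsInducedCycle G k y)
    (hp : p < k - 1) : G.Adj (y p) (y (k - 1)) ↔ p = 0 ∨ p = k - 2 := by
  rw [h.2 p (by lia) (k - 1) (by lia), Nat.mod_eq_of_lt (by lia : p + 1 < k),
    Nat.sub_add_cancel (by lia : 1 ≤ k), Nat.mod_self]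
  lia

lemma Dtup_zero : Dtup k v j 0 = v (j : ZMod k).val := by simp [Dtup, ZMod.val_natCast]

variable [NeZero k]

lemma Dtup_swap01 (p : ℕ) : Dtup k v j (swap01 p) = v ((j : ZMod k) - 1 + p).val := by
  have hk : 1 ≤ k := NeZero.one_le
  rcases p with _ | _ | p
  · simp [Dtup, swap01, ← ZMod.val_natCast, Nat.cast_sub (show 1 ≤ j + k by lia)]
  · simp [Dtup, swap01, ZMod.val_natCast]
  · have hcast : ((j + (p + 2) - 1 : ℕ) : ZMod k) = j - 1 + (p + 2 : ℕ) := by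
      rw [Nat.cast_sub (by lia)]
      push_cast
      ring
    rw [← hcast, ZMod.val_natCast]
    rfl

lemma extSeq_Dtup {i p : ℕ} (hp : p < i - 1) :
    extSeq (Dtup k v j) i x p = v ((j : ZMod k) - 1 + p).val := by
  rw [extSeq, if_neg hp.ne, Dtup_swap01]

lemma Dtup_one : Dtup k v j 1 = v ((j : ZMod k) - 1).val := by
  simpa [swap01] using Dtup_swap01 (k := k) (v := v) (j := j) 0

lemma IsInducedPath.mem_firstHitAfter_contacts {d : ℕ}
    (h : IsInducedPath G (d + 2) (extSeq (Dtup k v j) (d + 2) x)) :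
    (j : ZMod k) - 1 ∈ firstHitAfter (contacts G k v x) d := by
  have hlast : extSeq (Dtup k v j) (d + 2) x (d + 1) = x := extSeq_sub_one _ (d + 2) x
  have hadj {p : ℕ} (hp : p ≤ d) : (j : ZMod k) - 1 + p ∈ contacts G k v x ↔ p = d := by
    rw [mem_contacts, ← h.adj_last_iff hp, extSeq_Dtup (by lia), hlast]
  rw [mem_firstHitAfter]
  refine ⟨(hadj le_rfl).2 rfl, fun p hp => ?_⟩
  by_contra! hlt
  exact hlt.ne ((hadj hlt.le).1 hp)

lemma IsInducedCycle.mem_closingPoints_contacts (hk : 3 ≤ k)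
    (h : IsInducedCycle G k (extSeq (Dtup k v j) k x)) :
    (j : ZMod k) - 1 ∈ closingPoints (contacts G k v x) := by
  have hadj {p : ℕ} (hp : p < k - 1) :
      (j : ZMod k) - 1 + p ∈ contacts G k v x ↔ p = 0 ∨ p = k - 2 := by
    rw [mem_contacts, ← h.adj_last_iff hp, extSeq_Dtup hp, extSeq_sub_one]
  generalize (j : ZMod k) - 1 = t at hadj ⊢
  have hcast {i : ℕ} (hi : i ≤ k) : t + (k - i : ℕ) = t - i := by
    rw [Nat.cast_sub hi, ZMod.natCast_self]
    ring
  refine mem_closingPoints.2 ⟨?_, ?_, fun s hs => ?_⟩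
  · simpa using (hadj (p := 0) (by lia)).2 (.inl rfl)
  · simpa [hcast (show 2 ≤ k by lia)] using (hadj (p := k - 2) (by lia)).2 (.inr rfl)
  · obtain ⟨p, hp, rfl⟩ : ∃ p < k, s = t + (p : ℕ) :=
      ⟨(s - t).val, ZMod.val_lt _, by rw [ZMod.natCast_zmod_val]; ring⟩
    obtain rfl | hlt : p = k - 1 ∨ p < k - 1 := by lia
    · exact ⟨1, by lia, hcast (by lia)⟩
    · obtain rfl | rfl := (hadj hlt).1 hs
      · exact ⟨0, by lia, by simp⟩
      · exact ⟨2, le_rfl, hcast (by lia)⟩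

variable [Fintype V] (G v j)

-- The trivial shift `- 0` puts the count in the shape of `sum_range_card_filter_sub_mem`.
lemma nq_two : nq G k (Dtup k v j) 2 =
    #{x | (j : ZMod k) - 0 ∈ firstHitAfter (contacts G k v x) 0} := by
  simp [nq, Dtup_zero, mem_firstHitAfter_zero, mem_contacts, Nat.card_eq_fintype_card,
    Fintype.card_subtype]

lemma nq_three : nq G k (Dtup k v j) 3 =
    #{x | (j : ZMod k) - 1 ∈ firstHitAfter (contacts G k v x) 1} := by
  simp [nq, Dtup_zero, Dtup_one, mem_firstHitAfter_one, mem_contacts, Nat.card_eq_fintype_card,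
    Fintype.card_subtype]

lemma nq_add_two_le {d : ℕ} (hd : 2 ≤ d) (hdk : d + 2 < k) : nq G k (Dtup k v j) (d + 2) ≤
    #{x | (j : ZMod k) - 1 ∈ firstHitAfter (contacts G k v x) d} := by
  rw [nq, if_neg (by lia), if_neg (by lia), if_neg (by lia), if_pos hdk, Nat.card_eq_fintype_card,
    Fintype.card_subtype]
  exact card_le_card (monotone_filter_right _ fun x _ h => h.mem_firstHitAfter_contacts)

lemma nq_self_le (hk : 4 ≤ k) : nq G k (Dtup k v j) k ≤
    #{x | (j : ZMod k) - 1 ∈ closingPoints (contacts G k v x)} := by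
  rw [nq, if_neg (by lia), if_neg (by lia), if_neg (by lia), if_neg (by lia),
    Nat.card_eq_fintype_card, Fintype.card_subtype]
  exact card_le_card
    (monotone_filter_right _ fun x _ h => h.mem_closingPoints_contacts (by lia))

lemma sum_nq_le (hk : 4 ≤ k) : ∑ i ∈ Icc 4 k, nq G k (Dtup k v j) i ≤
    ∑ d ∈ Ico 2 (k - 2), #{x | (j : ZMod k) - 1 ∈ firstHitAfter (contacts G k v x) d}
      + #{x | (j : ZMod k) - 1 ∈ closingPoints (contacts G k v x)} :=
  calc ∑ i ∈ Icc 4 k, nq G k (Dtup k v j) i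
    _ = ∑ i ∈ Ico 4 k, nq G k (Dtup k v j) i + nq G k (Dtup k v j) k := by
      rw [← Ico_insert_right hk, sum_insert (by simp), add_comm]
    _ = ∑ d ∈ Ico 2 (k - 2), nq G k (Dtup k v j) (d + 2) + nq G k (Dtup k v j) k := by
      rw [sum_Ico_add' (nq G k (Dtup k v j)), Nat.sub_add_cancel (by lia)]
    _ ≤ _ := by
      refine add_le_add (sum_le_sum fun d hd => ?_) (nq_self_le G v j hk)
      rw [mem_Ico] at hd
      exact nq_add_two_le G v j hd.1 (by lia)

lemma two_mul_total_count_le (hk : 5 ≤ k) :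
    ∑ j ∈ range k, (nq G k (Dtup k v j) 2 + nq G k (Dtup k v j) 3
        + 2 * ∑ i ∈ Icc 4 k, nq G k (Dtup k v j) i)
      ≤ Fintype.card V * (2 * (k - 1)) := by
  let hits (x : V) (d : ℕ) : Finset (ZMod k) := firstHitAfter (contacts G k v x) d
  let closings (x : V) : Finset (ZMod k) := closingPoints (contacts G k v x)
  calc ∑ j ∈ range k, (nq G k (Dtup k v j) 2 + nq G k (Dtup k v j) 3
        + 2 * ∑ i ∈ Icc 4 k, nq G k (Dtup k v j) i)
    _ ≤ ∑ j ∈ range k, (#{x | (j : ZMod k) - 0 ∈ hits x 0} + #{x | (j : ZMod k) - 1 ∈ hits x 1}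
        + 2 * (∑ d ∈ Ico 2 (k - 2), #{x | (j : ZMod k) - 1 ∈ hits x d}
          + #{x | (j : ZMod k) - 1 ∈ closings x})) := by
      gcongr with j
      · exact (nq_two G v j).le
      · exact (nq_three G v j).le
      · exact sum_nq_le G v j (by lia)
    _ = ∑ x, (#(hits x 0) + #(hits x 1)
        + 2 * (∑ d ∈ Ico 2 (k - 2), #(hits x d) + #(closings x))) := by
      simp only [sum_add_distrib, ← mul_sum, sum_comm (s := range k) (t := Ico 2 (k - 2)),
        sum_comm (s := univ) (t := Ico 2 (k - 2)), sum_range_card_filter_sub_mem]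
    _ ≤ ∑ _x : V, 2 * (k - 1) := sum_le_sum fun x _ =>
      card_firstHitAfter_add_card_closingPoints_le hk _ fun d hd => (mem_Ico.1 hd).1
    _ = Fintype.card V * (2 * (k - 1)) := by simp

end Counts

theorem total_weighted_count_le_general {V : Type*} [Fintype V] (G : SimpleGraph V) {k : ℕ}
    (hk : 5 ≤ k) (v : ℕ → V) :
    ∑ j ∈ Finset.range k,
        ((nq G k (Dtup k v j) 2 : ℝ) / 2 + (nq G k (Dtup k v j) 3 : ℝ) / 2
          + ∑ i ∈ Finset.Icc 4 k, (nq G k (Dtup k v j) i : ℝ))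
      ≤ Fintype.card V * (k - 1) := by
  have : NeZero k := ⟨by lia⟩
  have hcount : ((∑ j ∈ range k, (nq G k (Dtup k v j) 2 + nq G k (Dtup k v j) 3
      + 2 * ∑ i ∈ Icc 4 k, nq G k (Dtup k v j) i) : ℕ) : ℝ)
      ≤ (Fintype.card V * (2 * (k - 1)) : ℕ) := by
    exact_mod_cast two_mul_total_count_le G v hk
  push_cast [Nat.cast_sub (show 1 ≤ k by lia)] at hcount
  simp only [sum_add_distrib, ← mul_sum, ← sum_div] at hcount ⊢
  linarith

/-- Let `G` be a graph on `n` vertices, `k ≥ 5`, and `v 0, …, v (k-1)` an induced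
cycle of length `k` in `G`. With `n_{j,i}` the quantity `n_i` for the good tuple
`D_j = (v_j, v_{j-1}, v_{j+1}, …, v_{j+k-2})` (indices mod `k`), we have
`∑_{j=1}^{k} (n_{j,2}/2 + n_{j,3}/2 + n_{j,4} + ⋯ + n_{j,k}) ≤ n (k - 1)`. -/
theorem total_weighted_count_le {V : Type} [Fintype V] (G : SimpleGraph V) (n k : ℕ)
    (hn : Fintype.card V = n) (hk : 5 ≤ k) (v : ℕ → V) (hv : IsInducedCycle G k v) :
    ∑ j ∈ Finset.range k,
        ((nq G k (Dtup k v j) 2 : ℝ) / 2 + (nq G k (Dtup k v j) 3 : ℝ) / 2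
          + ∑ i ∈ Finset.Icc 4 k, (nq G k (Dtup k v j) i : ℝ))
      ≤ n * (k - 1) :=
  hn ▸ total_weighted_count_le_general G hk v
end
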